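/- Let μ₁ and μ₂ be Borel probability measures on ℝ₊ = [0, +∞), and let λ₁, λ₂, λ, α ∈ ℂ ∖ {0} satisfy: (1) 1/λ₁ ∉ supp(μ₁) and 1/λ₂ ∉ supp(μ₂); (2) ψ_{μ₁}(λ₁) = ψ_{μ₂}(λ₂) = α with α ≠ −1; (3) λ₁λ₂ = λ·α/(1 + α). For j = 1, 2 set V_j = ∫_{ℝ₊} (1 − λ_j t)⁻² dμ_j(t) − (∫_{ℝ₊} (1 − λ_j t)⁻¹ dμ_j(t))². Then k_{μ₁}′(λ₁) · k_{μ₂}′(λ₂) = V₁·V₂ / (λ²·α²·(α + 1)²). -/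

import Mathlib

/-!
Write `S(w) = ∫ (t - w)⁻¹ dμ(t)` for the resolvent transform of a probability measure `μ`. In the
coordinate `w = 1/z` one has `1 + ψ_μ(z) = -w S(w)`, and hence `k_μ(z) = w + 1/S(w)`. As `S'(w)` is
`∫ (t - w)⁻² dμ(t)`, differentiating gives `k_μ'(z) = w² (S'(w) - S(w)²) / S(w)²`, that is,
`k_μ'(λ) = V / (λ² (1 + ψ_μ(λ))²)`. In a product of two such factors with
`ψ_{μ₁}(λ₁) = ψ_{μ₂}(λ₂) = α` the denominator is
`(λ₁ λ₂ (1 + α))² (1 + α)² = (λ α)² (1 + α)²`.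
-/

open MeasureTheory

/-- The topological support of a measure: the set of points all of whose neighborhoods
have positive measure. -/
def Measure.msupport {α : Type*} [TopologicalSpace α] {m : MeasurableSpace α}
    (μ : Measure α) : Set α :=
  {x | ∀ U ∈ nhds x, 0 < μ U}

open Filter Topology

lemma msupport_eq_support {E : Type*} [TopologicalSpace E] [MeasurableSpace E] (μ : Measure E) :
    Measure.msupport μ = μ.support :=
  Set.ext fun x => (Measure.mem_support_iff_forall x).symm

lemma notMem_image_support_of_forall_msupport_ne {E F : Type*} [TopologicalSpace E]
    [MeasurableSpace E] {μ : Measure E} {f : E → F} {w : F}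
    (h : ∀ t ∈ Measure.msupport μ, f t ≠ w) :
    w ∉ f '' μ.support := by
  rintro ⟨t, ht, htw⟩
  exact h t (msupport_eq_support μ ▸ ht) htw

lemma resolvent_inv_eq {R K : Type*} [CommSemiring R] [Field K] [Algebra R K] {z : K} (hz : z ≠ 0)
    (t : R) : resolvent z⁻¹ t = -z * (1 - z * algebraMap R K t)⁻¹ := by
  have factor : algebraMap R K t - z⁻¹ = (-z)⁻¹ * (1 - z * algebraMap R K t) := by
    field_simp
    ring
  rw [resolvent, Ring.inverse_eq_inv', factor, mul_inv, inv_inv]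

section Transforms

variable {𝕜 A : Type*} [NontriviallyNormedField 𝕜] [MeasurableSpace 𝕜] [RCLike A]
  [NormedAlgebra 𝕜 A]

/-- The transform `ψ_μ(z) = ∫ zt / (1 - zt) dμ(t)`, the generating function of the moments of
`μ` of order at least one. The measure lives on a field `𝕜` embedded in the field `A` of the
variable `z`, so that measures on `ℝ` and on `ℂ` are both covered. -/
noncomputable def psiTransform (μ : Measure 𝕜) (z : A) : A :=
  ∫ t, z * algebraMap 𝕜 A t / (1 - z * algebraMap 𝕜 A t) ∂μ

/-- The transform `η_μ = ψ_μ / (1 + ψ_μ)`, with value `0` where `ψ_μ = -1`. -/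
noncomputable def etaTransform (μ : Measure 𝕜) (z : A) : A :=
  psiTransform μ z / (1 + psiTransform μ z)

/-- The transform `k_μ(z) = η_μ(z) / z`. -/
noncomputable def kTransform (μ : Measure 𝕜) (z : A) : A :=
  etaTransform μ z / z

/-- The variance term `V = ∫ (1 - zt)⁻² dμ(t) - (∫ (1 - zt)⁻¹ dμ(t))²` of the resolvent. The
squares involve no complex conjugate, so `V` depends holomorphically on `z`. -/
noncomputable def resolventVariance (μ : Measure 𝕜) (z : A) : A :=
  ∫ t, ((1 - z * algebraMap 𝕜 A t) ^ 2)⁻¹ ∂μ - (∫ t, (1 - z * algebraMap 𝕜 A t)⁻¹ ∂μ) ^ 2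

lemma resolventTransform_inv_eq (μ : Measure 𝕜) {z : A} (hz : z ≠ 0) :
    resolventTransform μ z⁻¹ = -z * ∫ t, (1 - z * algebraMap 𝕜 A t)⁻¹ ∂μ := by
  simp only [resolventTransform_apply, resolvent_inv_eq hz, integral_const_mul]

lemma integral_resolvent_inv_sq_eq (μ : Measure 𝕜) {z : A} (hz : z ≠ 0) :
    ∫ t, resolvent z⁻¹ t ^ 2 ∂μ = z ^ 2 * ∫ t, ((1 - z * algebraMap 𝕜 A t) ^ 2)⁻¹ ∂μ := by
  simp only [resolvent_inv_eq hz, mul_pow, neg_sq, inv_pow, integral_const_mul]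

variable [HereditarilyLindelofSpace 𝕜]

lemma ae_one_sub_mul_ne_zero {μ : Measure 𝕜} {z : A} (hμ : z⁻¹ ∉ algebraMap 𝕜 A '' μ.support) :
    ∀ᵐ t ∂μ, 1 - z * algebraMap 𝕜 A t ≠ 0 := by
  filter_upwards [Measure.support_mem_ae] with t ht h
  exact hμ ⟨t, ht, eq_inv_of_mul_eq_one_right (sub_eq_zero.mp h).symm⟩

variable [CompleteSpace 𝕜] [BorelSpace 𝕜] {μ : Measure 𝕜}

lemma integrable_inv_one_sub_mul [IsFiniteMeasure μ] {z : A} (hz : z ≠ 0)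
    (hμ : z⁻¹ ∉ algebraMap 𝕜 A '' μ.support) :
    Integrable (fun t => (1 - z * algebraMap 𝕜 A t)⁻¹) μ := by
  have h := integrable_resolvent hμ
  simp only [funext (resolvent_inv_eq hz)] at h
  exact (integrable_const_mul_iff (neg_ne_zero.mpr hz).isUnit _).mp h

variable [IsProbabilityMeasure μ]

lemma one_add_psiTransform {z : A} (hz : z ≠ 0) (hμ : z⁻¹ ∉ algebraMap 𝕜 A '' μ.support) :
    1 + psiTransform μ z = ∫ t, (1 - z * algebraMap 𝕜 A t)⁻¹ ∂μ := by
  have h : psiTransform μ z = ∫ t, ((1 - z * algebraMap 𝕜 A t)⁻¹ - 1) ∂μ := by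
    refine integral_congr_ae ?_
    filter_upwards [ae_one_sub_mul_ne_zero hμ] with t ht
    field_simp
    ring
  rw [h, integral_sub (integrable_inv_one_sub_mul hz hμ) (integrable_const _)]
  simp only [integral_const, probReal_univ, one_smul, add_sub_cancel]

lemma resolventTransform_inv_eq_neg_mul_one_add_psiTransform {z : A} (hz : z ≠ 0)
    (hμ : z⁻¹ ∉ algebraMap 𝕜 A '' μ.support) :
    resolventTransform μ z⁻¹ = -z * (1 + psiTransform μ z) := by
  rw [resolventTransform_inv_eq μ hz, one_add_psiTransform hz hμ]

lemma kTransform_eq_inv_add_inv_resolventTransform {z : A} (hz : z ≠ 0)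
    (hμ : z⁻¹ ∉ algebraMap 𝕜 A '' μ.support) (hS : resolventTransform μ z⁻¹ ≠ 0) :
    kTransform μ z = z⁻¹ + (resolventTransform μ z⁻¹)⁻¹ := by
  rw [resolventTransform_inv_eq_neg_mul_one_add_psiTransform hz hμ] at hS ⊢
  have hψ : 1 + psiTransform μ z ≠ 0 := right_ne_zero_of_mul hS
  rw [kTransform, etaTransform]
  field_simp
  ring

lemma kTransform_eventuallyEq {l : A} (hl : l ≠ 0) (hμ : l⁻¹ ∉ algebraMap 𝕜 A '' μ.support)
    (hS : resolventTransform μ l⁻¹ ≠ 0) :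
    kTransform μ =ᶠ[𝓝 l] fun z => z⁻¹ + (resolventTransform μ z⁻¹)⁻¹ := by
  have hclosed : IsClosed (algebraMap 𝕜 A '' μ.support) :=
    (algebraMap_isometry 𝕜 A).isClosedEmbedding.isClosedMap _ Measure.isClosed_support
  have hcont : ContinuousAt (fun z => resolventTransform μ z⁻¹) l :=
    (hasDerivAt_resolventTransform l⁻¹ hμ).continuousAt.comp (continuousAt_inv₀ hl)
  filter_upwards [eventually_ne_nhds hl,
    (continuousAt_inv₀ hl).eventually_mem (hclosed.isOpen_compl.mem_nhds hμ),
    hcont.eventually_ne hS] with z hz hzμ hzS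
  exact kTransform_eq_inv_add_inv_resolventTransform hz hzμ hzS

lemma hasDerivAt_kTransform {l : A} (hl : l ≠ 0) (hμ : l⁻¹ ∉ algebraMap 𝕜 A '' μ.support)
    (hψ : psiTransform μ l ≠ -1) :
    HasDerivAt (kTransform μ)
      (resolventVariance μ l / (l ^ 2 * (1 + psiTransform μ l) ^ 2)) l := by
  have hψ' : 1 + psiTransform μ l ≠ 0 := fun h => hψ (eq_neg_of_add_eq_zero_right h)
  have hS := resolventTransform_inv_eq_neg_mul_one_add_psiTransform hl hμ
  have hS₀ : resolventTransform μ l⁻¹ ≠ 0 := hS ▸ mul_ne_zero (neg_ne_zero.mpr hl) hψ'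
  have hS_deriv := (hasDerivAt_resolventTransform l⁻¹ hμ).comp l (hasDerivAt_inv hl)
  refine (((hasDerivAt_inv hl).add (hS_deriv.inv hS₀)).congr_of_eventuallyEq
    (kTransform_eventuallyEq hl hμ hS₀)).congr_deriv ?_
  rw [Function.comp_apply, integral_resolvent_inv_sq_eq μ hl, hS, resolventVariance,
    ← one_add_psiTransform hl hμ]
  field_simp
  ring

end Transforms

theorem k_deriv_product_formula_general {𝕜 A : Type*} [NontriviallyNormedField 𝕜]
    [MeasurableSpace 𝕜] [BorelSpace 𝕜] [HereditarilyLindelofSpace 𝕜] [CompleteSpace 𝕜] [RCLike A]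
    [NormedAlgebra 𝕜 A] (μ₁ μ₂ : Measure 𝕜) [IsProbabilityMeasure μ₁] [IsProbabilityMeasure μ₂]
    {l₁ l₂ l α : A} (hl₁ : l₁ ≠ 0) (hl₂ : l₂ ≠ 0) (hα1 : α ≠ -1)
    (hμ₁ : l₁⁻¹ ∉ algebraMap 𝕜 A '' μ₁.support) (hμ₂ : l₂⁻¹ ∉ algebraMap 𝕜 A '' μ₂.support)
    (hψ₁ : psiTransform μ₁ l₁ = α) (hψ₂ : psiTransform μ₂ l₂ = α)
    (hll : l₁ * l₂ = l * α / (1 + α)) :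
    deriv (kTransform μ₁) l₁ * deriv (kTransform μ₂) l₂ =
      resolventVariance μ₁ l₁ * resolventVariance μ₂ l₂ / (l ^ 2 * α ^ 2 * (α + 1) ^ 2) := by
  have hα : 1 + α ≠ 0 := fun h => hα1 (eq_neg_of_add_eq_zero_right h)
  have hlα : l₁ * l₂ * (1 + α) = l * α := (eq_div_iff hα).mp hll
  have hdenom : l₁ ^ 2 * (1 + α) ^ 2 * (l₂ ^ 2 * (1 + α) ^ 2) = l ^ 2 * α ^ 2 * (α + 1) ^ 2 := by
    calc
      _ = (l₁ * l₂ * (1 + α)) ^ 2 * (α + 1) ^ 2 := by ring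
      _ = _ := by rw [hlα, mul_pow]
  rw [(hasDerivAt_kTransform hl₁ hμ₁ (hψ₁ ▸ hα1)).deriv,
    (hasDerivAt_kTransform hl₂ hμ₂ (hψ₂ ▸ hα1)).deriv, hψ₁, hψ₂, div_mul_div_comm, hdenom]

/-- For probability measures `μ₁, μ₂` on `ℝ₊` and points `λ₁, λ₂, λ, α ≠ 0` with
`1/λⱼ ∉ supp(μⱼ)`, `ψ_{μ₁}(λ₁) = ψ_{μ₂}(λ₂) = α ≠ -1` and `λ₁λ₂ = λα/(1+α)`, the product
of the derivatives of `k_{μⱼ} = η_{μⱼ}(z)/z` satisfies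
`k_{μ₁}'(λ₁)·k_{μ₂}'(λ₂) = V₁V₂/(λ²α²(α+1)²)`, where `Vⱼ` is the variance term
`∫ (1-λⱼt)⁻² dμⱼ - (∫ (1-λⱼt)⁻¹ dμⱼ)²`. -/
theorem k_deriv_product_formula
    (μ₁ μ₂ : Measure ℝ) [IsProbabilityMeasure μ₁] [IsProbabilityMeasure μ₂]
    (hpos₁ : Measure.msupport μ₁ ⊆ Set.Ici 0)
    (hpos₂ : Measure.msupport μ₂ ⊆ Set.Ici 0)
    (l₁ l₂ l α : ℂ) (hl₁ : l₁ ≠ 0) (hl₂ : l₂ ≠ 0) (hl : l ≠ 0) (hα : α ≠ 0)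
    (hα1 : α ≠ -1)
    (hs₁ : ∀ t ∈ Measure.msupport μ₁, (t : ℂ) ≠ l₁⁻¹)
    (hs₂ : ∀ t ∈ Measure.msupport μ₂, (t : ℂ) ≠ l₂⁻¹)
    (hψ₁ : (∫ t : ℝ, l₁ * t / (1 - l₁ * t) ∂μ₁) = α)
    (hψ₂ : (∫ t : ℝ, l₂ * t / (1 - l₂ * t) ∂μ₂) = α)
    (hll : l₁ * l₂ = l * α / (1 + α)) :
    deriv (fun z : ℂ =>
        ((∫ t : ℝ, z * t / (1 - z * t) ∂μ₁) / (1 + ∫ t : ℝ, z * t / (1 - z * t) ∂μ₁)) / z) l₁ *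
    deriv (fun z : ℂ =>
        ((∫ t : ℝ, z * t / (1 - z * t) ∂μ₂) / (1 + ∫ t : ℝ, z * t / (1 - z * t) ∂μ₂)) / z) l₂ =
    (((∫ t : ℝ, ((1 - l₁ * t : ℂ)^2)⁻¹ ∂μ₁) - (∫ t : ℝ, (1 - l₁ * t : ℂ)⁻¹ ∂μ₁)^2) *
     ((∫ t : ℝ, ((1 - l₂ * t : ℂ)^2)⁻¹ ∂μ₂) - (∫ t : ℝ, (1 - l₂ * t : ℂ)⁻¹ ∂μ₂)^2)) /
      (l^2 * α^2 * (α + 1)^2) := by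
  exact k_deriv_product_formula_general μ₁ μ₂ hl₁ hl₂ hα1
    (notMem_image_support_of_forall_msupport_ne hs₁)
    (notMem_image_support_of_forall_msupport_ne hs₂) hψ₁ hψ₂ hll
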